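/- arXiv:0805.0817 — 3 statements merged into one kernel-verified Lean document; each statement's English description precedes it below -/
import Mathlib

section
/- For each positive integer n and every real number m ≠ 0, the sum over all ordered trees T with n vertices of the quantity w(T) · ∏_{v ∈ T} 1/(h_v · m^{h_v - 1}) equals 1/n!, where w(T) = ∏_{v ∈ T} C(m, c_v), C(m, k) denotes the generalized binomial coefficient m(m-1)⋯(m-k+1)/k!, c_v is the number of children of v, and h_v is the hook length of v. In particular the value of the sum is independent of m. -/
/-- An ordered tree: a root together with a (possibly empty) list of ordered
subtrees, the children being linearly ordered by the list order. -/
inductive OTree : Type where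
  | node : List OTree → OTree

/-- The number of vertices of an ordered tree. -/
def OTree.size : OTree → ℕ
  | .node ts => 1 + (ts.attach.map (fun x => OTree.size x.1)).sum
decreasing_by
  simp only [OTree.node.sizeOf_spec]
  have := List.sizeOf_lt_of_mem x.2
  omega

/-- The product, over all vertices `v` of an ordered tree, of `f c_v h_v`,
where `c_v` is the number of children of `v` and `h_v` is the hook length of
`v` (the number of descendants of `v` including `v` itself). -/
def OTree.prodF (f : ℕ → ℕ → ℝ) : OTree → ℝ
  | .node ts => f ts.length (OTree.size (.node ts)) *
      (ts.attach.map (fun x => OTree.prodF f x.1)).prod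
decreasing_by
  simp only [OTree.node.sizeOf_spec]
  have := List.sizeOf_lt_of_mem x.2
  omega

/-- The generalized binomial coefficient `C(m,k) = m(m-1)⋯(m-k+1)/k!`. -/
noncomputable def genChoose (m : ℝ) (k : ℕ) : ℝ :=
  (∏ i ∈ Finset.range k, (m - i)) / Nat.factorial k

theorem OTree.size_node (ts : List OTree) :
    OTree.size (.node ts) = 1 + (ts.map OTree.size).sum := by
  rw [OTree.size, List.attach_map_val (f := OTree.size)]

theorem OTree.prodF_node (f : ℕ → ℕ → ℝ) (ts : List OTree) :
    OTree.prodF f (.node ts) = f ts.length (OTree.size (.node ts)) *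
      (ts.map (OTree.prodF f)).prod := by
  rw [OTree.prodF, List.attach_map_val (f := OTree.prodF f)]

open Classical in
noncomputable def forest : ℕ → Finset (List OTree)
  | 0 => {[]}
  | n + 1 => (Finset.univ : Finset (Fin (n+1))).biUnion fun i =>
      (forest i ×ˢ forest (n - i)).image fun p => OTree.node p.1 :: p.2
decreasing_by
  all_goals omega

theorem mem_forest (n : ℕ) : ∀ l : List OTree,
    l ∈ forest n ↔ (l.map OTree.size).sum = n := by
  induction n using Nat.strong_induction_on with
  | _ n ih =>
    intro l
    cases n with
    | zero =>
      rw [forest]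
      cases l with
      | nil => simp
      | cons t l =>
        obtain ⟨ts⟩ := t
        simp [OTree.size_node]
    | succ n =>
      rw [forest]
      simp only [Finset.mem_biUnion, Finset.mem_univ, true_and, Finset.mem_image,
        Finset.mem_product, Prod.exists]
      constructor
      · rintro ⟨i, a, b, ⟨ha, hb⟩, rfl⟩
        rw [ih _ (by omega)] at ha hb
        simp only [List.map_cons, List.sum_cons, OTree.size_node]
        omega
      · intro h
        cases l with
        | nil => simp at h
        | cons t l =>
          obtain ⟨ts⟩ := t
          simp only [List.map_cons, List.sum_cons, OTree.size_node] at h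
          refine ⟨⟨(ts.map OTree.size).sum, by omega⟩, ts, l, ⟨?_, ?_⟩, rfl⟩
          · rw [ih _ (by simp only; omega)]
          · rw [ih _ (by omega)]; simp only; omega

theorem sum_forest_succ (n : ℕ) (F : List OTree → ℝ) :
    ∑ l ∈ forest (n+1), F l = ∑ p ∈ Finset.HasAntidiagonal.antidiagonal n,
      ∑ a ∈ forest p.1, ∑ b ∈ forest p.2, F (OTree.node a :: b) := by
  classical
  rw [Finset.Nat.sum_antidiagonal_eq_sum_range_succ_mk, Finset.sum_range, forest,
    Finset.sum_biUnion]
  · refine Finset.sum_congr rfl fun i _ => ?_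
    rw [Finset.sum_image, Finset.sum_product]
    rintro ⟨a, b⟩ _ ⟨c, d⟩ _ h
    simpa using h
  · intro i _ j _ hij
    refine Finset.disjoint_left.2 fun l hl hl' => hij ?_
    simp only [Finset.mem_image, Finset.mem_product, Prod.exists] at hl hl'
    obtain ⟨a, b, ⟨ha, -⟩, rfl⟩ := hl
    obtain ⟨c, d, ⟨hc, -⟩, h⟩ := hl'
    simp only [List.cons.injEq, OTree.node.injEq] at h
    rw [mem_forest] at ha hc
    rw [h.1] at hc
    exact Fin.ext (ha.symm.trans hc)

theorem length_le_of_mem_forest {n : ℕ} {l : List OTree} (h : l ∈ forest n) : l.length ≤ n := by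
  rw [mem_forest] at h
  subst h
  induction l with
  | nil => simp
  | cons t l ih =>
    obtain ⟨ts⟩ := t
    simp only [List.length_cons, List.map_cons, List.sum_cons, OTree.size_node]
    omega

noncomputable def SS (g : OTree → ℝ) (k n : ℕ) : ℝ :=
  ∑ l ∈ forest n, if l.length = k then (l.map g).prod else 0

theorem SS_zero (g : OTree → ℝ) (k : ℕ) : SS g k 0 = if k = 0 then 1 else 0 := by
  simp [SS, forest, eq_comm]

theorem SS_zero_succ (g : OTree → ℝ) (n : ℕ) : SS g 0 (n+1) = 0 := by
  simp [SS, sum_forest_succ]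

theorem SS_succ_succ (g : OTree → ℝ) (k n : ℕ) : SS g (k+1) (n+1) =
    ∑ p ∈ Finset.HasAntidiagonal.antidiagonal n, (∑ a ∈ forest p.1, g (.node a)) * SS g k p.2 := by
  rw [SS, sum_forest_succ]
  refine Finset.sum_congr rfl fun p _ => ?_
  rw [Finset.sum_mul]
  refine Finset.sum_congr rfl fun a _ => ?_
  rw [SS, Finset.mul_sum]
  refine Finset.sum_congr rfl fun b _ => ?_
  simp

theorem sum_forest_SS (g : OTree → ℝ) (c : ℕ → ℝ) (n : ℕ) :
    ∑ l ∈ forest n, c l.length * (l.map g).prod = ∑ k ∈ Finset.range (n+1), c k * SS g k n := by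
  simp only [SS, Finset.mul_sum]
  rw [Finset.sum_comm]
  refine Finset.sum_congr rfl fun l hl => ?_
  have := length_le_of_mem_forest hl
  simp only [mul_ite, mul_zero]
  rw [Finset.sum_ite_eq, if_pos]
  simp; omega

noncomputable def EE : PowerSeries ℝ := PowerSeries.exp ℝ - 1

theorem EE_const : PowerSeries.constantCoeff EE = 0 := by simp [EE]

theorem coeff_EE_pow {n k : ℕ} (h : n < k) : PowerSeries.coeff n (EE ^ k) = 0 := by
  have h1 : PowerSeries.X ∣ EE := PowerSeries.X_dvd_iff.2 EE_const
  exact PowerSeries.X_pow_dvd_iff.1 (pow_dvd_pow_of_dvd h1 k) n h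

theorem coeff_EE_succ (n k : ℕ) : PowerSeries.coeff (n+1) (EE ^ (k+1)) =
    ∑ p ∈ Finset.HasAntidiagonal.antidiagonal n, (1 / ((p.1+1).factorial : ℝ)) * PowerSeries.coeff p.2 (EE ^ k) := by
  rw [pow_succ', PowerSeries.coeff_mul, Finset.Nat.sum_antidiagonal_succ]
  simp [EE, PowerSeries.coeff_exp, PowerSeries.coeff_one]

theorem key_nat (n N : ℕ) : ∑ k ∈ Finset.range (n+1), (N.choose k : ℝ) *
    PowerSeries.coeff n (EE ^ k) = (N:ℝ)^n / n.factorial := by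
  have h1 : PowerSeries.exp ℝ = EE + 1 := by simp [EE]
  have h2 : PowerSeries.coeff n ((PowerSeries.exp ℝ)^N) = (N:ℝ)^n / n.factorial := by
    rw [PowerSeries.exp_pow_eq_rescale_exp]
    simp [PowerSeries.coeff_rescale, PowerSeries.coeff_exp, div_eq_mul_inv]
  rw [← h2, h1, add_pow, map_sum]
  have e : ∀ k, PowerSeries.coeff n (EE ^ k * 1 ^ (N-k) * (N.choose k : PowerSeries ℝ)) =
      (N.choose k : ℝ) * PowerSeries.coeff n (EE ^ k) := by
    intro k
    rw [one_pow, mul_one, mul_comm, ← map_natCast (PowerSeries.C (R := ℝ)), PowerSeries.coeff_C_mul]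
  simp only [e]
  have A : ∑ k ∈ Finset.range (n+1), (N.choose k : ℝ) * PowerSeries.coeff n (EE ^ k) =
      ∑ k ∈ Finset.range (n+N+1), (N.choose k : ℝ) * PowerSeries.coeff n (EE ^ k) := by
    apply Finset.sum_subset
    · intro x; simp; omega
    · intro x _ hx
      rw [coeff_EE_pow (by simpa using hx), mul_zero]
  rw [A]
  symm
  apply Finset.sum_subset
  · intro x; simp; omega
  · intro x _ hx
    rw [Nat.choose_eq_zero_of_lt (by simpa using hx)]; simp

theorem key (n : ℕ) (m : ℝ) : ∑ k ∈ Finset.range (n+1), genChoose m k *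
    PowerSeries.coeff n (EE ^ k) = m^n / n.factorial := by
  let P : Polynomial ℝ := ∑ k ∈ Finset.range (n+1), descPochhammer ℝ k *
    Polynomial.C ((k.factorial : ℝ)⁻¹ * PowerSeries.coeff n (EE ^ k))
  let Q : Polynomial ℝ := Polynomial.X ^ n * Polynomial.C ((n.factorial : ℝ)⁻¹)
  have hP : P = Q := by
    apply Polynomial.eq_of_infinite_eval_eq
    apply (Set.infinite_range_of_injective (Nat.cast_injective (R := ℝ))).mono
    rintro _ ⟨N, rfl⟩
    simp only [Set.mem_setOf_eq, P, Q, Polynomial.eval_finsetSum, Polynomial.eval_mul,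
      Polynomial.eval_C, Polynomial.eval_pow, Polynomial.eval_X,
      descPochhammer_eval_eq_descFactorial]
    rw [← div_eq_mul_inv, ← key_nat]
    refine Finset.sum_congr rfl fun k _ => ?_
    rw [Nat.descFactorial_eq_factorial_mul_choose]
    have : (k.factorial : ℝ) ≠ 0 := by positivity
    push_cast
    field_simp
  have := congrArg (Polynomial.eval m) hP
  simp only [P, Q, Polynomial.eval_finsetSum, Polynomial.eval_mul,
      Polynomial.eval_C, Polynomial.eval_pow, Polynomial.eval_X,
      descPochhammer_eval_eq_prod_range] at this
  rw [div_eq_mul_inv, ← this]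
  refine Finset.sum_congr rfl fun k _ => ?_
  rw [genChoose]; ring

noncomputable def wt (m : ℝ) (T : OTree) : ℝ :=
  (T.prodF fun c _ => genChoose m c) *
        (T.prodF fun _ h => 1 / ((h : ℝ) * m ^ (h - 1)))

theorem sum_wt (m : ℝ) (n : ℕ) : ∑ a ∈ forest n, wt m (.node a) =
    (1 / (((n+1 : ℕ) : ℝ) * m ^ n)) *
      ∑ k ∈ Finset.range (n+1), genChoose m k * SS (wt m) k n := by
  rw [← sum_forest_SS, Finset.mul_sum]
  refine Finset.sum_congr rfl fun a ha => ?_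
  rw [mem_forest] at ha
  have hs : OTree.size (.node a) = n + 1 := by rw [OTree.size_node, ha, add_comm]
  have : (a.map (wt m)).prod = (a.map (OTree.prodF fun c _ => genChoose m c)).prod *
      (a.map (OTree.prodF fun _ h => 1 / ((h : ℝ) * m ^ (h - 1)))).prod :=
    List.prod_map_mul
  rw [this, wt, OTree.prodF_node, OTree.prodF_node, hs, Nat.add_sub_cancel]
  ring

theorem sum_wt_of (m : ℝ) (hm : m ≠ 0) (n : ℕ)
    (h : ∀ k, SS (wt m) k n = PowerSeries.coeff n (EE ^ k)) :
    ∑ a ∈ forest n, wt m (.node a) = 1 / ((n+1).factorial : ℝ) := by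
  rw [sum_wt]
  simp only [h, key]
  rw [Nat.factorial_succ]
  push_cast
  field_simp

theorem SS_eq (m : ℝ) (hm : m ≠ 0) (n : ℕ) :
    ∀ k, SS (wt m) k n = PowerSeries.coeff n (EE ^ k) := by
  induction n using Nat.strong_induction_on with
  | _ n ih =>
    intro k
    cases n with
    | zero =>
      rw [SS_zero]
      cases k <;> simp [EE_const]
    | succ n =>
      cases k with
      | zero => rw [SS_zero_succ]; simp [PowerSeries.coeff_one]
      | succ k =>
        rw [SS_succ_succ, coeff_EE_succ]
        refine Finset.sum_congr rfl fun p hp => ?_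
        rw [Finset.HasAntidiagonal.mem_antidiagonal] at hp
        rw [sum_wt_of m hm p.1 (ih _ (by omega)), ih p.2 (by omega)]

/-- Yang's formula: for every positive integer `n` and every real `m ≠ 0`,
`∑_{T ∈ O(n)} w(T) ∏_{v ∈ T} 1/(h_v m^{h_v-1}) = 1/n!`, where
`w(T) = ∏_{v ∈ T} C(m, c_v)`; in particular the sum is independent of `m`. -/
theorem yang_hook_length_formula (n : ℕ) (hn : 0 < n) (m : ℝ) (hm : m ≠ 0) :
    ∑' T : {T : OTree // T.size = n},
      ((T : OTree).prodF fun c _ => genChoose m c) *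
        ((T : OTree).prodF fun _ h => 1 / ((h : ℝ) * m ^ (h - 1))) =
      1 / (Nat.factorial n : ℝ) := by
  classical
  obtain ⟨n, rfl⟩ : ∃ k, n = k + 1 := ⟨n - 1, by omega⟩
  rw [← sum_wt_of m hm n (SS_eq m hm n)]
  have hinj : Set.InjOn OTree.node (forest n : Set (List OTree)) := by
    intro a _ b _ h
    simpa using h
  rw [← Finset.sum_image (f := wt m) hinj]
  have hmem : ∀ T : OTree, T ∈ {T : OTree | T.size = n + 1} ↔ T ∈ ((forest n).image OTree.node) := by
    rintro ⟨ts⟩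
    simp only [Set.mem_setOf_eq, Finset.mem_image, OTree.node.injEq, exists_eq_right, mem_forest,
      OTree.size_node]
    omega
  have hset : {T : OTree | T.size = n + 1} = (((forest n).image OTree.node : Finset OTree) : Set OTree) := by
    ext T; rw [hmem]; rfl
  change ∑' T : ({T : OTree | T.size = n + 1} : Set OTree), wt m T = _
  rw [hset]
  exact Finset.tsum_subtype _ _
end

section
/- Let T̄ be a fixed infinite ordered rooted tree in which every vertex v has c̄_v children with 0 < c̄_v < ∞. Then for each positive integer n, the sum over all subtrees T of T̄ with n vertices (rooted at the root of T̄) of the product over all vertices v of T of 1/(h_v · c̄_v^{h_v - 1}) equals 1/n!, where h_v is the hook length of v computed in T and c̄_v is the number of children of v in T̄. -/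
/-- We model a fixed infinite ordered rooted tree `T̄` by a function
`cb : List ℕ → ℕ` assigning to each vertex its number of children, vertices
being encoded as finite paths from the root: the root is `[]` and the
children of a vertex `p` are `p ++ [i]` for `i < cb p`.  A (finite) subtree
of `T̄` rooted at the root of `T̄` is a finite set of vertices containing the
root and closed under taking parents. -/
def IsSubtree (cb : List ℕ → ℕ) (S : Finset (List ℕ)) : Prop :=
  [] ∈ S ∧ ∀ v ∈ S, ∀ p i, v = p ++ [i] → p ∈ S ∧ i < cb p

/-- The hook length of a vertex `v` in the subtree `S`: the number of
descendants of `v` in `S`, including `v` itself (descendants of `v` are the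
vertices having `v` as a prefix). -/
def hookLen (S : Finset (List ℕ)) (v : List ℕ) : ℕ :=
  (S.filter (fun w => v <+: w)).card


namespace HookAux

def Q (cb : List ℕ → ℕ) (S : Finset (List ℕ)) : Prop :=
  ∀ v ∈ S, ∀ p i, v = p ++ [i] → p ∈ S ∧ i < cb p

noncomputable def W (cb : List ℕ → ℕ) (S : Finset (List ℕ)) : ℝ :=
  ∏ v ∈ S, (1 : ℝ) / ((hookLen S v : ℝ) * (cb v : ℝ) ^ (hookLen S v - 1))

def consE (i : ℕ) : List ℕ ↪ List ℕ := ⟨fun l => i :: l, fun _ _ h => (List.cons.inj h).2⟩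

lemma consE_apply (i : ℕ) (l : List ℕ) : consE i l = i :: l := rfl

def glue {c : ℕ} (x : Fin c → Finset (List ℕ)) : Finset (List ℕ) :=
  insert [] (Finset.univ.biUnion fun i : Fin c => (x i).map (consE i))

lemma nil_mem_glue {c : ℕ} (x : Fin c → Finset (List ℕ)) : [] ∈ glue x := by
  simp [glue]

lemma cons_mem_glue {c : ℕ} (x : Fin c → Finset (List ℕ)) (a : ℕ) (v : List ℕ) :
    a :: v ∈ glue x ↔ ∃ h : a < c, v ∈ x ⟨a, h⟩ := by
  simp only [glue, Finset.mem_insert, Finset.mem_biUnion, Finset.mem_map, consE_apply, Finset.mem_univ, true_and]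
  constructor
  · rintro (h | ⟨i, w, hw, h⟩)
    · cases h
    · obtain ⟨h1, h2⟩ := List.cons.inj h
      subst h1; subst h2
      exact ⟨i.2, hw⟩
  · rintro ⟨h, hv⟩
    exact Or.inr ⟨⟨a, h⟩, v, hv, rfl⟩

lemma sum_glue_disj {c : ℕ} (x : Fin c → Finset (List ℕ)) :
    Set.PairwiseDisjoint (↑(Finset.univ : Finset (Fin c)))
      (fun i : Fin c => (x i).map (consE i)) := by
  intro i _ j _ hij
  rw [Function.onFun, Finset.disjoint_left]
  intro v hv hv'
  simp only [Finset.mem_map, consE_apply] at hv hv'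
  obtain ⟨a, _, rfl⟩ := hv
  obtain ⟨b, _, h⟩ := hv'
  exact hij (Fin.ext (List.cons.inj h).1.symm)

lemma nil_notMem {c : ℕ} (x : Fin c → Finset (List ℕ)) :
    [] ∉ Finset.univ.biUnion fun i : Fin c => (x i).map (consE i) := by
  simp [consE_apply]

lemma card_glue {c : ℕ} (x : Fin c → Finset (List ℕ)) :
    (glue x).card = ∑ i, (x i).card + 1 := by
  rw [glue, Finset.card_insert_of_notMem (nil_notMem x), Finset.card_biUnion]
  · simp
  · intro i hi j hj hij
    exact sum_glue_disj x hi hj hij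

lemma hook_nil (S : Finset (List ℕ)) : hookLen S [] = S.card := by
  simp [hookLen]

lemma hook_cons {c : ℕ} (x : Fin c → Finset (List ℕ)) (i : Fin c) (v : List ℕ) :
    hookLen (glue x) (i :: v) = hookLen (x i) v := by
  unfold hookLen
  rw [← Finset.card_map (s := (x i).filter (fun w => v <+: w)) (consE i)]
  congr 1
  ext w
  cases w with
  | nil => simp [consE_apply]
  | cons a w =>
    simp only [Finset.mem_filter, cons_mem_glue, List.cons_prefix_cons, Finset.mem_map, consE_apply]
    constructor
    · rintro ⟨⟨h, hw⟩, h1, h2⟩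
      subst h1
      exact ⟨w, ⟨hw, h2⟩, rfl⟩
    · rintro ⟨u, ⟨hu, h2⟩, h⟩
      obtain ⟨h1, h3⟩ := List.cons.inj h
      subst h1; subst h3
      exact ⟨⟨i.2, hu⟩, rfl, h2⟩

lemma W_glue (cb : List ℕ → ℕ) {c : ℕ} (x : Fin c → Finset (List ℕ)) :
    W cb (glue x) = (1 / (((glue x).card : ℝ) * (cb [] : ℝ) ^ ((glue x).card - 1))) *
      ∏ i : Fin _, W (fun l => cb ((i : ℕ) :: l)) (x i) := by
  have key : ∀ g : List ℕ → ℝ, ∏ v ∈ glue x, g v = g [] * ∏ i : Fin c, ∏ v ∈ x i, g ((i : ℕ) :: v) := by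
    intro g
    rw [glue, Finset.prod_insert (nil_notMem x), Finset.prod_biUnion (sum_glue_disj x)]
    simp [consE_apply]
  unfold W
  rw [key, hook_nil]
  simp only [hook_cons]

lemma Q_prefix {cb : List ℕ → ℕ} {S : Finset (List ℕ)} (hS : Q cb S) (p q : List ℕ)
    (h : p ++ q ∈ S) : p ∈ S := by
  induction q using List.reverseRecOn with
  | nil => simpa using h
  | append_singleton q a ih =>
    exact ih (hS _ h (p ++ q) a (by simp)).1

lemma Q_glue (cb : List ℕ → ℕ) (x : Fin (cb []) → Finset (List ℕ))
    (hx : ∀ i : Fin _, Q (fun l => cb ((i : ℕ) :: l)) (x i)) : Q cb (glue x) := by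
  rintro v hv p j rfl
  cases p with
  | nil =>
    rw [List.nil_append, cons_mem_glue] at hv
    exact ⟨nil_mem_glue x, hv.1⟩
  | cons a p =>
    rw [List.cons_append, cons_mem_glue] at hv
    obtain ⟨h, hv⟩ := hv
    obtain ⟨h1, h2⟩ := hx _ _ hv p j rfl
    exact ⟨(cons_mem_glue _ _ _).2 ⟨h, h1⟩, h2⟩

noncomputable def unglue (c : ℕ) (S : Finset (List ℕ)) (i : Fin c) : Finset (List ℕ) :=
  S.preimage (consE i) (consE i).injective.injOn

lemma mem_unglue (c : ℕ) (S : Finset (List ℕ)) (i : Fin c) (v : List ℕ) :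
    v ∈ unglue c S i ↔ (i : ℕ) :: v ∈ S := by
  simp [unglue, consE_apply]

lemma unglue_glue {c : ℕ} (x : Fin c → Finset (List ℕ)) : unglue c (glue x) = x := by
  funext i
  ext v
  rw [mem_unglue, cons_mem_glue]
  simp

lemma glue_unglue {cb : List ℕ → ℕ} {S : Finset (List ℕ)} (hS : Q cb S) (hne : S.Nonempty) :
    glue (unglue (cb []) S) = S := by
  ext v
  cases v with
  | nil =>
    obtain ⟨w, hw⟩ := hne
    exact iff_of_true (nil_mem_glue _) (Q_prefix hS [] w hw)
  | cons a v =>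
    rw [cons_mem_glue]
    constructor
    · rintro ⟨h, hv⟩
      exact (mem_unglue _ _ _ _).1 hv
    · intro h
      have h1 : [a] ∈ S := Q_prefix hS [a] v h
      exact ⟨(hS _ h1 [] a rfl).2, (mem_unglue _ _ _ _).2 h⟩

lemma Q_unglue {cb : List ℕ → ℕ} {S : Finset (List ℕ)} (hS : Q cb S) (i : Fin (cb [])) :
    Q (fun l => cb ((i : ℕ) :: l)) (unglue (cb []) S i) := by
  rintro v hv p j rfl
  rw [mem_unglue] at hv ⊢
  exact hS _ hv (i :: p) j rfl

lemma multi (c n : ℕ) :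
    ∑ f ∈ Finset.piAntidiag (Finset.univ : Finset (Fin c)) n, ∏ i, (1 : ℝ) / ((f i).factorial : ℝ)
      = (c : ℝ) ^ n / (n.factorial : ℝ) := by
  have h := Finset.sum_pow_eq_sum_piAntidiag (Finset.univ : Finset (Fin c)) (fun _ => (1 : ℝ)) n
  simp only [Finset.sum_const, Finset.card_univ, Fintype.card_fin, nsmul_eq_mul, mul_one,
    one_pow, Finset.prod_const_one] at h
  rw [h, Finset.sum_div]
  refine Finset.sum_congr rfl fun f hf => ?_
  have hs := (Finset.mem_piAntidiag.1 hf).1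
  have h2 := Nat.multinomial_spec (Finset.univ : Finset (Fin c)) f
  rw [hs] at h2
  have h3 : (∏ i, ((f i).factorial : ℝ)) * (Nat.multinomial Finset.univ f : ℝ)
      = (n.factorial : ℝ) := by exact_mod_cast h2
  have h4 : (∏ i, ((f i).factorial : ℝ)) ≠ 0 :=
    Finset.prod_ne_zero_iff.2 fun i _ => by positivity
  have h5 : (n.factorial : ℝ) ≠ 0 := by positivity
  rw [Finset.prod_div_distrib, Finset.prod_const_one, div_eq_div_iff h4 h5, ← h3]
  ring

lemma main (n : ℕ) : ∀ cb : List ℕ → ℕ, (∀ x, 0 < cb x) →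
    ∃ A : Finset (Finset (List ℕ)), (∀ S, S ∈ A ↔ Q cb S ∧ S.card = n) ∧
      ∑ S ∈ A, W cb S = 1 / (n.factorial : ℝ) := by
  induction n using Nat.strong_induction_on with
  | _ n ih =>
  intro cb hcb
  rcases n with _ | n
  · refine ⟨{∅}, fun S => ?_, by simp [W]⟩
    rw [Finset.mem_singleton, Finset.card_eq_zero]
    constructor
    · rintro rfl
      exact ⟨fun v hv => by simp at hv, rfl⟩
    · exact fun h => h.2
  · have ih' : ∀ (i : Fin (cb [])) (m : ℕ), ∃ A : Finset (Finset (List ℕ)), m ≤ n →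
        (∀ S, S ∈ A ↔ Q (fun l => cb ((i : ℕ) :: l)) S ∧ S.card = m) ∧
        ∑ S ∈ A, W (fun l => cb ((i : ℕ) :: l)) S = 1 / (m.factorial : ℝ) := by
      intro i m
      by_cases hm : m ≤ n
      · obtain ⟨A, hA⟩ := ih m (by omega) (fun l => cb ((i : ℕ) :: l)) (fun _ => hcb _)
        exact ⟨A, fun _ => hA⟩
      · exact ⟨∅, fun h => absurd h hm⟩
    choose A hA using ih'
    have hle : ∀ f ∈ Finset.piAntidiag (Finset.univ : Finset (Fin (cb []))) n,
        ∀ i, f i ≤ n := by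
      intro f hf i
      rw [← (Finset.mem_piAntidiag.1 hf).1]
      exact Finset.single_le_sum (f := f) (fun _ _ => Nat.zero_le _) (Finset.mem_univ i)
    let B : Finset ((_ : Fin (cb []) → ℕ) × (Fin (cb []) → Finset (List ℕ))) :=
      (Finset.piAntidiag (Finset.univ : Finset (Fin (cb []))) n).sigma
        (fun f => Fintype.piFinset fun i => A i (f i))
    have hB : ∀ y ∈ B, (∑ i, y.1 i = n) ∧
        ∀ i : Fin _, Q (fun l => cb ((i : ℕ) :: l)) (y.2 i) ∧ (y.2 i).card = y.1 i := by
      intro y hy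
      obtain ⟨h1, h2⟩ := Finset.mem_sigma.1 hy
      refine ⟨(Finset.mem_piAntidiag.1 h1).1, fun i => ?_⟩
      exact ((hA i _ (hle _ h1 i)).1 _).1 (Fintype.mem_piFinset.1 h2 i)
    have hcard : ∀ y ∈ B, (glue y.2).card = n + 1 := by
      intro y hy
      obtain ⟨h1, h2⟩ := hB y hy
      rw [card_glue, Finset.sum_congr rfl (fun i _ => (h2 i).2), h1]
    refine ⟨B.image fun y => glue y.2, fun S => ?_, ?_⟩
    · rw [Finset.mem_image]
      constructor
      · rintro ⟨y, hy, rfl⟩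
        exact ⟨Q_glue cb y.2 fun i => ((hB y hy).2 i).1, hcard y hy⟩
      · rintro ⟨hS, hc⟩
        have hg := glue_unglue hS (Finset.card_pos.1 (by omega))
        refine ⟨⟨fun i => (unglue (cb []) S i).card, unglue (cb []) S⟩, ?_, hg⟩
        have hf : (fun i => (unglue (cb []) S i).card) ∈
            Finset.piAntidiag (Finset.univ : Finset (Fin (cb []))) n := by
          rw [Finset.mem_piAntidiag]
          refine ⟨?_, fun _ _ => Finset.mem_univ _⟩
          have := card_glue (unglue (cb []) S)
          rw [hg, hc] at this
          omega
        refine Finset.mem_sigma.2 ⟨hf, Fintype.mem_piFinset.2 fun i => ?_⟩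
        exact ((hA i _ (hle _ hf i)).1 _).2 ⟨Q_unglue hS i, rfl⟩
    · rw [Finset.sum_image]
      · rw [Finset.sum_congr rfl (g := fun y => (1 / (((n + 1 : ℕ) : ℝ) * (cb [] : ℝ) ^ n)) *
          ∏ i : Fin _, W (fun l => cb ((i : ℕ) :: l)) (y.2 i))
          (fun y hy => by rw [W_glue, hcard y hy, Nat.add_sub_cancel])]
        rw [← Finset.mul_sum, Finset.sum_sigma]
        have h1 : ∀ f ∈ Finset.piAntidiag (Finset.univ : Finset (Fin (cb []))) n,
            ∑ x ∈ Fintype.piFinset (fun i => A i (f i)),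
              ∏ i : Fin _, W (fun l => cb ((i : ℕ) :: l)) (x i) =
            ∏ i, (1 : ℝ) / ((f i).factorial : ℝ) := by
          intro f hf
          rw [← Finset.prod_univ_sum (fun i => A i (f i))
            (fun i S => W (fun l => cb ((i : ℕ) :: l)) S)]
          exact Finset.prod_congr rfl fun i _ => (hA i _ (hle f hf i)).2
        rw [Finset.sum_congr rfl h1, multi, Nat.factorial_succ]
        have : (cb [] : ℝ) ≠ 0 := by exact_mod_cast (hcb []).ne'
        have h5 : (n.factorial : ℝ) ≠ 0 := by positivity
        have h6 : ((n : ℝ) + 1) ≠ 0 := by positivity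
        push_cast
        field_simp
      · intro y hy z hz h
        have h2 : y.2 = z.2 := by
          rw [← unglue_glue y.2, ← unglue_glue z.2]
          exact congrArg _ h
        have h1 : y.1 = z.1 := by
          funext i
          rw [← ((hB y hy).2 i).2, ← ((hB z hz).2 i).2, h2]
        cases y; cases z
        simp only at h1 h2
        subst h1; subst h2; rfl

end HookAux

/-- For a fixed infinite ordered tree `T̄` in which every vertex has a finite
positive number of children, and every positive integer `n`,
`∑_{T ∈ T̄(n)} ∏_{v ∈ T} 1/(h_v c̄_v^{h_v-1}) = 1/n!`, where the sum is over
subtrees of `T̄` with `n` vertices, `h_v` is the hook length of `v` in `T`,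
and `c̄_v` is the number of children of `v` in `T̄`. -/
theorem infinite_tree_hook_length_formula (cb : List ℕ → ℕ) (hcb : ∀ x, 0 < cb x)
    (n : ℕ) (hn : 0 < n) :
    ∑' T : {S : Finset (List ℕ) // IsSubtree cb S ∧ S.card = n},
      ∏ v ∈ T.1, (1 : ℝ) / ((hookLen T.1 v : ℝ) * (cb v : ℝ) ^ (hookLen T.1 v - 1)) =
      1 / (Nat.factorial n : ℝ) := by
  obtain ⟨A, hA, hs⟩ := HookAux.main n cb hcb
  have key : ∀ S : Finset (List ℕ), IsSubtree cb S ∧ S.card = n ↔ S ∈ A := by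
    intro S
    rw [hA]
    constructor
    · exact fun h => ⟨h.1.2, h.2⟩
    · rintro ⟨h1, h2⟩
      obtain ⟨w, hw⟩ := Finset.card_pos.1 (by omega : 0 < S.card)
      exact ⟨⟨HookAux.Q_prefix h1 [] w hw, h1⟩, h2⟩
  rw [← hs, ← Finset.tsum_subtype A (HookAux.W cb)]
  exact (Equiv.subtypeEquivRight key).tsum_eq (fun T : {S // S ∈ A} => HookAux.W cb T.1)
end

section
/- For each positive integer n, every real number m ≠ 0, and every real number s, the sum over all ordered trees T with n vertices of ∏_{v ∈ T} C(m, c_v) s^{c_v} · ∏_{v ∈ T} 1/(h_v · m^{h_v - 1}) equals s^{n-1}/n!, where C(m,k) = m(m-1)⋯(m-k+1)/k! is the generalized binomial coefficient, c_v is the number of children of v, and h_v is the hook length of v. -/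
open Classical in
noncomputable def yForests : ℕ → Finset (List OTree)
  | 0 => {[]}
  | n + 1 => (Finset.range (n + 1)).attach.biUnion fun i =>
      (yForests i.1 ×ˢ yForests (n - i.1)).image fun p => OTree.node p.1 :: p.2
decreasing_by
  · exact Finset.mem_range.1 i.2
  · omega

theorem y_size_node (ts : List OTree) : (OTree.node ts).size = 1 + (ts.map OTree.size).sum := by
  rw [OTree.size]
  congr 2
  exact List.attach_map_val (l := ts) (f := OTree.size)

theorem y_prodF_node (f : ℕ → ℕ → ℝ) (ts : List OTree) : (OTree.node ts).prodF f =
    f ts.length (OTree.node ts).size * (ts.map (OTree.prodF f)).prod := by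
  rw [OTree.prodF]
  congr 2
  exact List.attach_map_val (l := ts) (f := OTree.prodF f)

theorem y_mem (n : ℕ) : ∀ ts : List OTree, ts ∈ yForests n ↔ (ts.map OTree.size).sum = n := by
  induction n using Nat.strong_induction_on with
  | _ n ih =>
    intro ts
    cases n with
    | zero =>
      rw [yForests]
      rcases ts with _ | ⟨⟨t⟩, us⟩
      · simp
      · simp [y_size_node]
    | succ n =>
      rw [yForests]
      simp only [Finset.mem_biUnion, Finset.mem_attach, true_and, Finset.mem_image,
        Finset.mem_product, Subtype.exists, Finset.mem_range, Prod.exists]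
      constructor
      · rintro ⟨i, hi, a, b, ⟨ha, hb⟩, rfl⟩
        rw [ih i hi] at ha
        rw [ih (n - i) (by omega)] at hb
        simp only [List.map_cons, List.sum_cons, y_size_node]
        omega
      · intro h
        rcases ts with _ | ⟨⟨t⟩, us⟩
        · simp at h
        · simp only [List.map_cons, List.sum_cons, y_size_node] at h
          refine ⟨(t.map OTree.size).sum, by omega, t, us, ⟨?_, ?_⟩, rfl⟩
          · rw [ih _ (by omega)]
          · rw [ih _ (by omega)]; omega

theorem y_sum_succ (n : ℕ) (g : List OTree → ℝ) :
    ∑ ts ∈ yForests (n + 1), g ts =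
      ∑ i ∈ Finset.range (n + 1), ∑ a ∈ yForests i, ∑ b ∈ yForests (n - i),
        g (OTree.node a :: b) := by
  classical
  rw [yForests, Finset.sum_biUnion]
  · rw [← Finset.sum_attach (Finset.range (n + 1))]
    refine Finset.sum_congr rfl fun i _ => ?_
    rw [Finset.sum_image, Finset.sum_product]
    rintro ⟨a, b⟩ _ ⟨c, d⟩ _ h
    simpa using h
  · intro i _ j _ hij
    rw [Function.onFun, Finset.disjoint_left]
    intro x hx hy
    simp only [Finset.mem_image, Finset.mem_product, Prod.exists, y_mem] at hx hy
    obtain ⟨a, b, ⟨ha, _⟩, rfl⟩ := hx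
    obtain ⟨c, d, ⟨hc, _⟩, h⟩ := hy
    simp only [List.cons.injEq, OTree.node.injEq] at h
    apply hij
    apply Subtype.ext
    rw [← ha, ← hc, h.1]

theorem y_genChoose_eval (m : ℝ) (k : ℕ) :
    genChoose m k = (descPochhammer ℝ k).eval m / Nat.factorial k := by
  rw [genChoose, descPochhammer_eval_eq_prod_range]

theorem y_genChoose_nat (M k : ℕ) : genChoose (M : ℝ) k = (M.choose k : ℝ) := by
  rw [y_genChoose_eval, descPochhammer_eval_eq_descFactorial, Nat.descFactorial_eq_factorial_mul_choose]
  have : (Nat.factorial k : ℝ) ≠ 0 := by positivity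
  push_cast
  field_simp

theorem y_coeff_zero (B : PowerSeries ℝ) (hB : PowerSeries.constantCoeff B = 0) {n k : ℕ}
    (h : n < k) : PowerSeries.coeff n (B ^ k) = 0 := by
  have h1 : (PowerSeries.X : PowerSeries ℝ) ^ k ∣ B ^ k :=
    pow_dvd_pow_of_dvd (PowerSeries.X_dvd_iff.2 hB) k
  exact PowerSeries.X_pow_dvd_iff.1 h1 n h

theorem y_cc (s : ℝ) : PowerSeries.constantCoeff
    (PowerSeries.rescale s (PowerSeries.exp ℝ)) = 1 := by
  rw [← PowerSeries.coeff_zero_eq_constantCoeff_apply, PowerSeries.coeff_rescale,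
    PowerSeries.coeff_exp]
  simp

theorem y_nat (s : ℝ) (n M : ℕ) :
    ∑ k ∈ Finset.range (n + 1), genChoose (M : ℝ) k *
      PowerSeries.coeff n ((PowerSeries.rescale s (PowerSeries.exp ℝ) - 1) ^ k) =
      (M * s) ^ n / Nat.factorial n := by
  set B := PowerSeries.rescale s (PowerSeries.exp ℝ) - 1 with hBdef
  have hB : PowerSeries.constantCoeff B = 0 := by
    rw [hBdef, map_sub, y_cc, map_one, sub_self]
  have e : (B + 1) ^ M = PowerSeries.rescale (M * s) (PowerSeries.exp ℝ) := by
    rw [hBdef, sub_add_cancel, ← map_pow, PowerSeries.exp_pow_eq_rescale_exp,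
      PowerSeries.rescale_rescale]
  have e2 := congrArg (PowerSeries.coeff n) e
  rw [add_pow, map_sum, PowerSeries.coeff_rescale, PowerSeries.coeff_exp] at e2
  have e3 : ((M * s) ^ n / Nat.factorial n : ℝ) = ∑ k ∈ Finset.range (M + 1),
      genChoose (M : ℝ) k * PowerSeries.coeff n (B ^ k) := by
    rw [div_eq_mul_inv]
    simp only [one_div, map_inv₀, map_natCast] at e2
    rw [← e2]
    refine Finset.sum_congr rfl fun k _ => ?_
    rw [y_genChoose_nat, one_pow, mul_one, mul_comm, ← nsmul_eq_mul, map_nsmul, nsmul_eq_mul]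
  rw [e3]
  have l1 : ∀ N, n ≤ N → ∑ k ∈ Finset.range (n + 1),
      genChoose (M : ℝ) k * PowerSeries.coeff n (B ^ k) = ∑ k ∈ Finset.range (N + 1),
      genChoose (M : ℝ) k * PowerSeries.coeff n (B ^ k) := by
    intro N hN
    refine Finset.sum_subset (Finset.range_mono (by omega)) fun k _ hk => ?_
    rw [y_coeff_zero B hB (by simpa using hk), mul_zero]
  have l2 : ∀ N, M ≤ N → ∑ k ∈ Finset.range (M + 1),
      genChoose (M : ℝ) k * PowerSeries.coeff n (B ^ k) = ∑ k ∈ Finset.range (N + 1),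
      genChoose (M : ℝ) k * PowerSeries.coeff n (B ^ k) := by
    intro N hN
    refine Finset.sum_subset (Finset.range_mono (by omega)) fun k _ hk => ?_
    rw [y_genChoose_nat, Nat.choose_eq_zero_of_lt (by simpa using hk), Nat.cast_zero, zero_mul]
  rw [l1 (max n M) (le_max_left _ _), l2 (max n M) (le_max_right _ _)]

theorem y_real (s : ℝ) (n : ℕ) (m : ℝ) :
    ∑ k ∈ Finset.range (n + 1), genChoose m k *
      PowerSeries.coeff n ((PowerSeries.rescale s (PowerSeries.exp ℝ) - 1) ^ k) =
      (m * s) ^ n / Nat.factorial n := by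
  set c : ℕ → ℝ := fun k =>
    PowerSeries.coeff n ((PowerSeries.rescale s (PowerSeries.exp ℝ) - 1) ^ k) with hc
  let p : Polynomial ℝ := ∑ k ∈ Finset.range (n + 1),
    descPochhammer ℝ k * Polynomial.C (c k / Nat.factorial k)
  let q : Polynomial ℝ := Polynomial.X ^ n * Polynomial.C (s ^ n / Nat.factorial n)
  have hp : ∀ x, p.eval x = ∑ k ∈ Finset.range (n + 1), genChoose x k * c k := by
    intro x
    simp only [p, Polynomial.eval_finsetSum, Polynomial.eval_mul, Polynomial.eval_C,
      y_genChoose_eval]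
    exact Finset.sum_congr rfl fun k _ => by ring
  have hq : ∀ x, q.eval x = (x * s) ^ n / Nat.factorial n := by
    intro x
    simp only [q, Polynomial.eval_mul, Polynomial.eval_C, Polynomial.eval_pow, Polynomial.eval_X]
    ring
  have hpq : p = q := by
    apply Polynomial.eq_of_infinite_eval_eq
    refine (Set.infinite_range_of_injective (Nat.cast_injective (R := ℝ))).mono ?_
    rintro _ ⟨M, rfl⟩
    rw [Set.mem_ofPred_eq, hp, hq]
    exact y_nat s n M
  rw [← hp, ← hq, hpq]

noncomputable def yA (s : ℝ) : PowerSeries ℝ :=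
  PowerSeries.mk fun n => if n = 0 then 0 else s ^ (n - 1) / Nat.factorial n

theorem yA_B (s : ℝ) :
    PowerSeries.C s * yA s = PowerSeries.rescale s (PowerSeries.exp ℝ) - 1 := by
  ext n
  cases n with
  | zero => simp [yA, y_cc]
  | succ n =>
    simp [yA, PowerSeries.coeff_rescale, PowerSeries.coeff_one, PowerSeries.coeff_exp, pow_succ]
    ring

theorem yA_id (s : ℝ) (n : ℕ) (m : ℝ) :
    ∑ k ∈ Finset.range (n + 1), genChoose m k * s ^ k * PowerSeries.coeff n (yA s ^ k) =
      (m * s) ^ n / Nat.factorial n := by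
  rw [← y_real]
  refine Finset.sum_congr rfl fun k _ => ?_
  rw [← yA_B, mul_pow, ← map_pow, PowerSeries.coeff_C_mul]
  ring

noncomputable def yW (m s : ℝ) (T : OTree) : ℝ :=
  (T.prodF fun c _ => genChoose m c * s ^ c) *
        (T.prodF fun _ h => 1 / ((h : ℝ) * m ^ (h - 1)))

theorem yW_node (m s : ℝ) (ts : List OTree) : yW m s (.node ts) =
    genChoose m ts.length * s ^ ts.length * (1 / (((OTree.node ts).size : ℝ) *
      m ^ ((OTree.node ts).size - 1))) * (ts.map (yW m s)).prod := by
  unfold yW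
  rw [y_prodF_node, y_prodF_node, List.prod_map_mul]
  ring

theorem y_len_le (n : ℕ) (ts : List OTree) (h : ts ∈ yForests n) : ts.length ≤ n := by
  rw [y_mem] at h
  subst h
  induction ts with
  | nil => simp
  | cons t ts ih =>
    rcases t with ⟨t⟩
    simp only [List.length_cons, List.map_cons, List.sum_cons, y_size_node]
    omega

theorem y_tree_step (m s : ℝ) (hm : m ≠ 0) (n : ℕ)
    (h : ∀ k, ∑ ts ∈ yForests n, (if ts.length = k then (ts.map (yW m s)).prod else 0) =
      PowerSeries.coeff n (yA s ^ k)) :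
    ∑ ts ∈ yForests n, yW m s (.node ts) = s ^ n / Nat.factorial (n + 1) := by
  have e : ∑ ts ∈ yForests n, yW m s (.node ts) = (1 / (((n + 1 : ℕ) : ℝ) * m ^ n)) *
      ∑ k ∈ Finset.range (n + 1), genChoose m k * s ^ k * PowerSeries.coeff n (yA s ^ k) := by
    simp only [← h, Finset.mul_sum]
    rw [Finset.sum_comm]
    refine Finset.sum_congr rfl fun ts hts => ?_
    have hl := y_len_le n ts hts
    rw [Finset.sum_eq_single ts.length]
    · rw [y_mem] at hts
      rw [yW_node, y_size_node, hts, if_pos rfl, Nat.add_sub_cancel_left, add_comm 1 n]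
      ring
    · intro b _ hb
      rw [if_neg (Ne.symm hb)]; simp
    · intro h; exact absurd (Finset.mem_range.2 (by omega)) h
  rw [e, yA_id, Nat.factorial_succ, mul_pow]
  have : (Nat.factorial n : ℝ) ≠ 0 := by positivity
  push_cast
  field_simp

theorem y_main (m s : ℝ) (hm : m ≠ 0) (n : ℕ) : ∀ k,
    ∑ ts ∈ yForests n, (if ts.length = k then (ts.map (yW m s)).prod else 0) =
      PowerSeries.coeff n (yA s ^ k) := by
  have hA : PowerSeries.coeff 0 (yA s) = 0 := by simp [yA]
  induction n using Nat.strong_induction_on with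
  | _ n ih =>
    intro k
    cases n with
    | zero =>
      rw [yForests]
      cases k with
      | zero => simp
      | succ k =>
        rw [y_coeff_zero _ (by simpa using hA) (Nat.succ_pos k)]
        simp
    | succ n =>
      rw [y_sum_succ]
      cases k with
      | zero => simp [PowerSeries.coeff_one]
      | succ k =>
        rw [pow_succ', PowerSeries.coeff_mul, Finset.Nat.sum_antidiagonal_eq_sum_range_succ
          (fun i j => PowerSeries.coeff i (yA s) * PowerSeries.coeff j (yA s ^ k)),
          Finset.sum_range_succ' _ (n + 1), hA, zero_mul, add_zero]
        refine Finset.sum_congr rfl fun i hi => ?_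
        rw [Finset.mem_range] at hi
        rw [Nat.add_sub_add_right, ← ih (n - i) (by omega) k]
        have : PowerSeries.coeff (i + 1) (yA s) = ∑ ts ∈ yForests i, yW m s (.node ts) := by
          rw [y_tree_step m s hm i (ih i hi)]
          simp [yA]
        rw [this, Finset.sum_mul_sum]
        refine Finset.sum_congr rfl fun a _ => Finset.sum_congr rfl fun b _ => ?_
        simp

/-- Yang's formula with the extra parameter `s`: for every positive integer
`n`, every real `m ≠ 0` and every real `s`,
`∑_{T ∈ O(n)} (∏_{v ∈ T} C(m,c_v) s^{c_v}) ∏_{v ∈ T} 1/(h_v m^{h_v-1})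
  = s^{n-1}/n!`. -/
theorem yang_weighted_hook_length_formula (n : ℕ) (hn : 0 < n) (m : ℝ) (hm : m ≠ 0) (s : ℝ) :
    ∑' T : {T : OTree // T.size = n},
      ((T : OTree).prodF fun c _ => genChoose m c * s ^ c) *
        ((T : OTree).prodF fun _ h => 1 / ((h : ℝ) * m ^ (h - 1))) =
      s ^ (n - 1) / (Nat.factorial n : ℝ) := by
  classical
  obtain ⟨n, rfl⟩ : ∃ k, n = k + 1 := ⟨n - 1, by omega⟩
  have key := y_tree_step m s hm n (y_main m s hm n)
  have inj : ∀ x ∈ yForests n, ∀ y ∈ yForests n, OTree.node x = OTree.node y → x = y := by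
    intro x _ y _ h
    simpa using h
  have hS : ∀ T : OTree, T.size = n + 1 ↔ T ∈ (yForests n).image OTree.node := by
    rintro ⟨ts⟩
    simp only [Finset.mem_image, OTree.node.injEq, exists_eq_right, y_mem, y_size_node]
    omega
  change ∑' T : {T : OTree // T.size = n + 1}, yW m s T = _
  rw [← (Equiv.subtypeEquivRight hS).symm.tsum_eq]
  simp only [Equiv.subtypeEquivRight_symm_apply_coe]
  rw [Finset.tsum_subtype ((yForests n).image OTree.node) (yW m s), Finset.sum_image inj, key]
  rfl
end
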